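/- arXiv:2507.19008 — 9 statements merged into one kernel-verified Lean document; each statement's English description precedes it below -/
import Mathlib

section
/- For valid chain elements x and y (i.e., terms of α ⊕ β whose left components lie in P and right components lie in Q), the relation 'x ⊑ y or y ⊑ x' is transitive: if x ⊑ y or y ⊑ x, and y ⊑ z or z ⊑ y, then x ⊑ z or z ⊑ x. Consequently, 'sharing a chain' is an equivalence relation on the set of valid chain elements. -/
def SB.Valid {α β : Type*} (P : Set α) (Q : Set β) : α ⊕ β → Prop
  | Sum.inl p => p ∈ P
  | Sum.inr q => q ∈ Q

def SB.step {α β : Type*} (f : α → β) (g : β → α) : α ⊕ β → α ⊕ β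
  | Sum.inl p => Sum.inr (f p)
  | Sum.inr q => Sum.inl (g q)

def SB.ChainLE {α β : Type*} (f : α → β) (g : β → α) : α ⊕ β → α ⊕ β → Prop :=
  Relation.ReflTransGen (fun x y => y = SB.step f g x)

theorem SB.valid_of_le {α β : Type*} {P : Set α} {Q : Set β} {f : α → β} {g : β → α}
    (hfm : Set.MapsTo f P Q) (hgm : Set.MapsTo g Q P) {x y : α ⊕ β}
    (hx : SB.Valid P Q x) (h : SB.ChainLE f g x y) : SB.Valid P Q y := by
  induction h with
  | refl => exact hx
  | @tail b c _ hbc ih =>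
    subst hbc
    cases b with
    | inl p => exact hfm ih
    | inr q => exact hgm ih

theorem SB.step_inj {α β : Type*} {P : Set α} {Q : Set β} {f : α → β} {g : β → α}
    (hfi : Set.InjOn f P) (hgi : Set.InjOn g Q) {x y : α ⊕ β}
    (hx : SB.Valid P Q x) (hy : SB.Valid P Q y)
    (h : SB.step f g x = SB.step f g y) : x = y := by
  cases x with
  | inl p =>
    cases y with
    | inl p' => exact congrArg Sum.inl (hfi hx hy (Sum.inr.inj h))
    | inr q => exact absurd h Sum.inr_ne_inl
  | inr q =>
    cases y with
    | inl p => exact absurd h Sum.inl_ne_inr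
    | inr q' => exact congrArg Sum.inr (hgi hx hy (Sum.inl.inj h))

theorem SB.total_below {α β : Type*} {P : Set α} {Q : Set β} {f : α → β} {g : β → α}
    (hfm : Set.MapsTo f P Q) (hfi : Set.InjOn f P)
    (hgm : Set.MapsTo g Q P) (hgi : Set.InjOn g Q) {x y z : α ⊕ β}
    (hx : SB.Valid P Q x) (hz : SB.Valid P Q z)
    (hxy : SB.ChainLE f g x y) (hzy : SB.ChainLE f g z y) :
    SB.ChainLE f g x z ∨ SB.ChainLE f g z x := by
  induction hxy with
  | refl => exact Or.inr hzy
  | @tail b c hxb hbc ih =>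
    rcases Relation.ReflTransGen.cases_tail hzy with h | ⟨d, hzd, hd⟩
    · exact Or.inl (h ▸ Relation.ReflTransGen.tail hxb hbc)
    · have hbd : b = d := SB.step_inj hfi hgi (SB.valid_of_le hfm hgm hx hxb)
        (SB.valid_of_le hfm hgm hz hzd) (hbc.symm.trans hd)
      subst hbd
      exact ih hzd

theorem chain_comparable_trans {α β : Type*} (P : Set α) (Q : Set β)
    (f : α → β) (g : β → α)
    (hfm : Set.MapsTo f P Q) (hfi : Set.InjOn f P)
    (hgm : Set.MapsTo g Q P) (hgi : Set.InjOn g Q)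
    (x y z : α ⊕ β) (hx : SB.Valid P Q x) (hy : SB.Valid P Q y)
    (hz : SB.Valid P Q z)
    (hxy : SB.ChainLE f g x y ∨ SB.ChainLE f g y x)
    (hyz : SB.ChainLE f g y z ∨ SB.ChainLE f g z y) :
    SB.ChainLE f g x z ∨ SB.ChainLE f g z x := by
  rcases hxy with hxy | hxy <;> rcases hyz with hyz | hyz
  · exact Or.inl (Relation.ReflTransGen.trans hxy hyz)
  · exact SB.total_below hfm hfi hgm hgi hx hz hxy hyz
  · exact Relation.ReflTransGen.total_of_right_unique
      (fun _ _ _ h₁ h₂ => h₁.trans h₂.symm) hxy hyz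
  · exact Or.inr (Relation.ReflTransGen.trans hyz hxy)
end

section
/- An element i is initial if and only if it is minimal with respect to the chain preorder: for a valid chain element i, i is initial (i.e., Sum.inl p with p ∈ P and p ∉ g '' Q, or Sum.inr q with q ∈ Q and q ∉ f '' P) if and only if for every valid chain element x with x ⊑ i one has x = i. -/
def SB.Initial {α β : Type*} (P : Set α) (Q : Set β) (f : α → β) (g : β → α) :
    α ⊕ β → Prop
  | Sum.inl p => p ∉ g '' Q
  | Sum.inr q => q ∉ f '' P

theorem initial_iff_minimal {α β : Type*} (P : Set α) (Q : Set β)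
    (f : α → β) (g : β → α)
    (hfm : Set.MapsTo f P Q) (hfi : Set.InjOn f P)
    (hgm : Set.MapsTo g Q P) (hgi : Set.InjOn g Q)
    (i : α ⊕ β) (hi : SB.Valid P Q i) :
    SB.Initial P Q f g i ↔
      ∀ x : α ⊕ β, SB.Valid P Q x → SB.ChainLE f g x i → x = i := by
  constructor
  · intro h x hx hxi
    rcases Relation.ReflTransGen.cases_tail hxi with h1 | ⟨b, hxb, hb⟩
    · exact h1.symm
    · exfalso
      have hv : SB.Valid P Q b := by
        clear hb
        induction hxb with
        | refl => exact hx
        | @tail c d _ hcd ih =>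
          subst hcd
          cases c with
          | inl p => exact hfm ih
          | inr q => exact hgm ih
      subst hb
      cases b with
      | inl p => exact h ⟨p, hv, rfl⟩
      | inr q => exact h ⟨q, hv, rfl⟩
  · intro h
    cases i with
    | inl p =>
      rintro ⟨q, hq, rfl⟩
      have := h (Sum.inr q) hq (Relation.ReflTransGen.single rfl)
      cases this
    | inr q =>
      rintro ⟨p, hp, rfl⟩
      have := h (Sum.inl p) hp (Relation.ReflTransGen.single rfl)
      cases this
end

section
/- For an initial element i and any valid chain element x, one has x ⊑ i if and only if x = i. -/
theorem chainLE_initial_iff_eq {α β : Type*} (P : Set α) (Q : Set β)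
    (f : α → β) (g : β → α)
    (hfm : Set.MapsTo f P Q) (hfi : Set.InjOn f P)
    (hgm : Set.MapsTo g Q P) (hgi : Set.InjOn g Q)
    (i : α ⊕ β) (hiv : SB.Valid P Q i) (hii : SB.Initial P Q f g i)
    (x : α ⊕ β) (hx : SB.Valid P Q x) :
    SB.ChainLE f g x i ↔ x = i := by
  constructor
  · intro h
    have hv : ∀ y, Relation.ReflTransGen (fun x y => y = SB.step f g x) x y →
        SB.Valid P Q y := by
      intro y hy
      induction hy with
      | refl => exact hx
      | tail _ hs ih =>
        rename_i b c _
        subst hs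
        cases b with
        | inl p => exact hfm ih
        | inr q => exact hgm ih
    rcases Relation.ReflTransGen.cases_tail h with h | ⟨b, hb, hs⟩
    · exact h.symm
    · have hbv := hv b hb
      subst hs
      cases b with
      | inl p => exact absurd ⟨p, hbv, rfl⟩ hii
      | inr q => exact absurd ⟨q, hbv, rfl⟩ hii
  · rintro rfl
    exact Relation.ReflTransGen.refl
end

section
/- If p ∈ P and the chain element Sum.inl p lies in a Q-stopper, then p is in the image of g on Q, i.e., p ∈ g '' Q. -/
def SB.InQStopper {α β : Type*} (P : Set α) (Q : Set β) (f : α → β) (g : β → α)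
    (x : α ⊕ β) : Prop :=
  ∃ q ∈ Q, SB.Initial P Q f g (Sum.inr q) ∧ SB.ChainLE f g (Sum.inr q) x

theorem mem_image_g_of_inQStopper {α β : Type*} (P : Set α) (Q : Set β)
    (f : α → β) (g : β → α)
    (hfm : Set.MapsTo f P Q) (hfi : Set.InjOn f P)
    (hgm : Set.MapsTo g Q P) (hgi : Set.InjOn g Q)
    (p : α) (hp : p ∈ P) (hq : SB.InQStopper P Q f g (Sum.inl p)) :
    p ∈ g '' Q := by 
  obtain ⟨q, hqQ, -, hc⟩ := hq
  have hv : ∀ x, SB.ChainLE f g (Sum.inr q) x → SB.Valid P Q x := by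
    intro x hx
    induction hx with
    | refl => exact hqQ
    | @tail b c _ h ih =>
      subst h
      cases b with
      | inl a => exact hfm ih
      | inr a => exact hgm ih
  rcases Relation.ReflTransGen.cases_tail hc with h | ⟨b, hb, h⟩
  · cases h
  · have hvb := hv b hb
    cases b with
    | inl a => cases h
    | inr a => exact ⟨a, hvb, (Sum.inl.inj h).symm⟩
end

section
/- The bijective witness preserves chain membership: for every p ∈ P, the chain elements Sum.inl p and Sum.inr (h p) belong to the same chain, i.e., Sum.inl p ⊑ Sum.inr (h p) or Sum.inr (h p) ⊑ Sum.inl p. -/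
open Classical in
noncomputable def SB.h {α β : Type*} (P : Set α) (Q : Set β) (f : α → β)
    (g : β → α) (p : α) : β :=
  if hq : SB.InQStopper P Q f g (Sum.inl p) then
    haveI : Nonempty β := ⟨hq.choose⟩
    Function.invFunOn g Q p
  else f p

theorem SB.valid_of_chain {α β : Type*} (P : Set α) (Q : Set β)
    (f : α → β) (g : β → α)
    (hfm : Set.MapsTo f P Q) (hgm : Set.MapsTo g Q P)
    {x y : α ⊕ β} (hx : SB.Valid P Q x) (h : SB.ChainLE f g x y) : SB.Valid P Q y := by
  unfold SB.ChainLE at h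
  induction h with
  | refl => exact hx
  | @tail b c _ hbc ih =>
    subst hbc
    cases b with
    | inl a => exact hfm ih
    | inr a => exact hgm ih

theorem h_preserves_chain {α β : Type*} (P : Set α) (Q : Set β)
    (f : α → β) (g : β → α)
    (hfm : Set.MapsTo f P Q) (hfi : Set.InjOn f P)
    (hgm : Set.MapsTo g Q P) (hgi : Set.InjOn g Q)
    (p : α) (hp : p ∈ P) :
    SB.ChainLE f g (Sum.inl p) (Sum.inr (SB.h P Q f g p)) ∨
      SB.ChainLE f g (Sum.inr (SB.h P Q f g p)) (Sum.inl p) := by 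
  by_cases hq : SB.InQStopper P Q f g (Sum.inl p)
  · right
    have hpq : p ∈ g '' Q := by
      obtain ⟨q, hqQ, _, hc⟩ := hq
      rcases Relation.ReflTransGen.cases_tail hc with h | ⟨b, hb, hs⟩
      · cases h
      · have hv := SB.valid_of_chain P Q f g hfm hgm (x := Sum.inr q) hqQ hb
        cases b with
        | inl a => cases hs
        | inr a => exact ⟨a, hv, (Sum.inl.inj hs).symm⟩
    haveI : Nonempty β := ⟨hq.choose⟩
    have he : SB.h P Q f g p = Function.invFunOn g Q p := by
      unfold SB.h
      rw [dif_pos hq]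
    rw [he]
    refine Relation.ReflTransGen.single ?_
    exact congrArg Sum.inl (Function.invFunOn_eq hpq).symm
  · left
    have he : SB.h P Q f g p = f p := by
      unfold SB.h
      rw [dif_neg hq]
    rw [he]
    exact Relation.ReflTransGen.single rfl
end

section
/- Injectivity of the bijective witness: for all p₀, p₁ ∈ P, if h p₀ = h p₁ then p₀ = p₁; that is, h is injective on P. -/
theorem SB.valid_of_stopper {α β : Type*} {P : Set α} {Q : Set β} {f : α → β} {g : β → α}
    (hfm : Set.MapsTo f P Q) (hgm : Set.MapsTo g Q P) {x : α ⊕ β}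
    (hx : SB.InQStopper P Q f g x) : SB.Valid P Q x := by
  obtain ⟨q, hq, -, hc⟩ := hx
  unfold SB.ChainLE at hc
  induction hc with
  | refl => exact hq
  | @tail b c _ hbc ih =>
    subst hbc
    cases b with
    | inl p => exact hfm ih
    | inr q => exact hgm ih

theorem SB.pred_inl {α β : Type*} {P : Set α} {Q : Set β} {f : α → β} {g : β → α}
    (hfm : Set.MapsTo f P Q) (hgm : Set.MapsTo g Q P) {p : α}
    (hx : SB.InQStopper P Q f g (Sum.inl p)) :
    ∃ q ∈ Q, g q = p ∧ SB.InQStopper P Q f g (Sum.inr q) := by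
  obtain ⟨q, hq, hi, hc⟩ := hx
  rcases Relation.ReflTransGen.cases_tail hc with h | ⟨b, hb, hs⟩
  · cases h
  · have hst : SB.InQStopper P Q f g b := ⟨q, hq, hi, hb⟩
    cases b with
    | inl p' => cases hs
    | inr q' => exact ⟨q', SB.valid_of_stopper hfm hgm hst, (Sum.inl.inj hs).symm, hst⟩

theorem SB.pred_inr {α β : Type*} {P : Set α} {Q : Set β} {f : α → β} {g : β → α}
    (hfm : Set.MapsTo f P Q) (hgm : Set.MapsTo g Q P) {p : α} (hp : p ∈ P)
    (hx : SB.InQStopper P Q f g (Sum.inr (f p))) :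
    ∃ p' ∈ P, f p' = f p ∧ SB.InQStopper P Q f g (Sum.inl p') := by
  obtain ⟨q, hq, hi, hc⟩ := hx
  rcases Relation.ReflTransGen.cases_tail hc with h | ⟨b, hb, hs⟩
  · exact absurd ⟨p, hp, Sum.inr.inj h⟩ hi
  · have hst : SB.InQStopper P Q f g b := ⟨q, hq, hi, hb⟩
    cases b with
    | inl p' => exact ⟨p', SB.valid_of_stopper hfm hgm hst, (Sum.inr.inj hs).symm, hst⟩
    | inr q' => cases hs

theorem h_injOn {α β : Type*} (P : Set α) (Q : Set β)
    (f : α → β) (g : β → α)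
    (hfm : Set.MapsTo f P Q) (hfi : Set.InjOn f P)
    (hgm : Set.MapsTo g Q P) (hgi : Set.InjOn g Q) :
    Set.InjOn (SB.h P Q f g) P := by
  have key : ∀ p, SB.InQStopper P Q f g (Sum.inl p) →
      SB.h P Q f g p ∈ Q ∧ g (SB.h P Q f g p) = p ∧
        SB.InQStopper P Q f g (Sum.inr (SB.h P Q f g p)) := by
    intro p hp
    obtain ⟨q, hqQ, hq, hqs⟩ := SB.pred_inl hfm hgm hp
    have hex : ∃ a ∈ Q, g a = p := ⟨q, hqQ, hq⟩
    haveI : Nonempty β := ⟨q⟩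
    have he : SB.h P Q f g p = Function.invFunOn g Q p := by
      unfold SB.h
      rw [dif_pos hp]
    have h1 := Function.invFunOn_mem hex
    have h2 := Function.invFunOn_eq hex
    have h3 : Function.invFunOn g Q p = q := hgi h1 hqQ (h2.trans hq.symm)
    rw [he, h3]
    exact ⟨hqQ, hq, hqs⟩
  have keyn : ∀ p, ¬ SB.InQStopper P Q f g (Sum.inl p) → SB.h P Q f g p = f p := by
    intro p hp
    unfold SB.h
    rw [dif_neg hp]
  have back : ∀ p ∈ P, SB.InQStopper P Q f g (Sum.inr (f p)) →
      SB.InQStopper P Q f g (Sum.inl p) := by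
    intro p hp hs
    obtain ⟨p', hp', he, hs'⟩ := SB.pred_inr hfm hgm hp hs
    rwa [hfi hp' hp he] at hs'
  intro a ha b hb hab
  by_cases h0 : SB.InQStopper P Q f g (Sum.inl a) <;>
    by_cases h1 : SB.InQStopper P Q f g (Sum.inl b)
  · rw [← (key a h0).2.1, ← (key b h1).2.1, hab]
  · have := (key a h0).2.2
    rw [hab, keyn b h1] at this
    exact absurd (back b hb this) h1
  · have := (key b h1).2.2
    rw [← hab, keyn a h0] at this
    exact absurd (back a ha this) h0
  · rw [keyn a h0, keyn b h1] at hab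
    exact hfi ha hb hab
end

section
/- Surjectivity of the bijective witness: for every q ∈ Q there exists p ∈ P such that h p = q; that is, Q is contained in the image of P under h. -/
theorem h_surjOn {α β : Type*} (P : Set α) (Q : Set β)
    (f : α → β) (g : β → α)
    (hfm : Set.MapsTo f P Q) (hfi : Set.InjOn f P)
    (hgm : Set.MapsTo g Q P) (hgi : Set.InjOn g Q) :
    ∀ q ∈ Q, ∃ p ∈ P, SB.h P Q f g p = q := by 
  intro q hq
  by_cases hs : SB.InQStopper P Q f g (Sum.inr q)
  · refine ⟨g q, hgm hq, ?_⟩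
    have hs' : SB.InQStopper P Q f g (Sum.inl (g q)) := by
      obtain ⟨r, hr, hi, hc⟩ := hs
      exact ⟨r, hr, hi, Relation.ReflTransGen.tail hc rfl⟩
    rw [SB.h, dif_pos hs']
    haveI : Nonempty β := ⟨q⟩
    have hex : ∃ a ∈ Q, g a = g q := ⟨q, hq, rfl⟩
    exact hgi (Function.invFunOn_mem hex) hq (Function.invFunOn_eq hex)
  · have hq' : q ∈ f '' P := by
      by_contra hn
      exact hs ⟨q, hq, hn, Relation.ReflTransGen.refl⟩
    obtain ⟨p, hp, rfl⟩ := hq'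
    refine ⟨p, hp, ?_⟩
    rw [SB.h, dif_neg]
    rintro ⟨r, hr, hi, hc⟩
    exact hs ⟨r, hr, hi, Relation.ReflTransGen.tail hc rfl⟩
end

section
/- Schröder–Bernstein (explicit witness): the function h is a bijection from P onto Q, i.e., h maps P into Q, is injective on P, and maps P onto Q (Set.BijOn h P Q). -/
theorem SB.valid_of_inQ {α β : Type*} {P : Set α} {Q : Set β} {f : α → β} {g : β → α}
    (hfm : Set.MapsTo f P Q) (hgm : Set.MapsTo g Q P) {x : α ⊕ β}
    (h : SB.InQStopper P Q f g x) : SB.Valid P Q x := by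
  obtain ⟨q, hq, -, hc⟩ := h
  unfold SB.ChainLE at hc
  induction hc with
  | refl => exact hq
  | @tail b c _ hs ih =>
    subst hs
    cases b with
    | inl p => exact hfm ih
    | inr q => exact hgm ih

theorem SB.inQ_step {α β : Type*} {P : Set α} {Q : Set β} {f : α → β} {g : β → α}
    {x : α ⊕ β} (h : SB.InQStopper P Q f g x) : SB.InQStopper P Q f g (SB.step f g x) := by
  obtain ⟨q, hq, hi, hc⟩ := h
  exact ⟨q, hq, hi, Relation.ReflTransGen.tail hc rfl⟩

theorem SB.inQ_cases {α β : Type*} {P : Set α} {Q : Set β} {f : α → β} {g : β → α}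
    {x : α ⊕ β} (h : SB.InQStopper P Q f g x) :
    (∃ q, x = Sum.inr q ∧ q ∉ f '' P) ∨ ∃ y, SB.InQStopper P Q f g y ∧ x = SB.step f g y := by
  obtain ⟨q, hq, hi, hc⟩ := h
  rcases Relation.ReflTransGen.cases_tail hc with h | ⟨y, hy, hs⟩
  · exact Or.inl ⟨q, h, hi⟩
  · exact Or.inr ⟨y, ⟨q, hq, hi, hy⟩, hs⟩

theorem h_bijOn {α β : Type*} (P : Set α) (Q : Set β)
    (f : α → β) (g : β → α)
    (hfm : Set.MapsTo f P Q) (hfi : Set.InjOn f P)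
    (hgm : Set.MapsTo g Q P) (hgi : Set.InjOn g Q) :
    Set.BijOn (SB.h P Q f g) P Q := by
  have hA : ∀ p, SB.InQStopper P Q f g (Sum.inl p) →
      ∃ q ∈ Q, g q = p ∧ SB.InQStopper P Q f g (Sum.inr q) := by
    intro p hp
    rcases SB.inQ_cases hp with ⟨q, h, -⟩ | ⟨y, hy, hs⟩
    · cases h
    · cases y with
      | inl p' => cases hs
      | inr q => exact ⟨q, SB.valid_of_inQ hfm hgm hy, (Sum.inl.inj hs).symm, hy⟩
  have hC : ∀ p ∈ P, SB.InQStopper P Q f g (Sum.inr (f p)) →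
      SB.InQStopper P Q f g (Sum.inl p) := by
    intro p hpP hp
    rcases SB.inQ_cases hp with ⟨q, h, hn⟩ | ⟨y, hy, hs⟩
    · exact absurd ⟨p, hpP, Sum.inr.inj h⟩ hn
    · cases y with
      | inl p' =>
        have := hfi hpP (SB.valid_of_inQ hfm hgm hy) (Sum.inr.inj hs)
        rwa [this]
      | inr q => cases hs
  have h1 : ∀ q ∈ Q, SB.InQStopper P Q f g (Sum.inr q) → SB.h P Q f g (g q) = q := by
    intro q hq hs
    have hs' : SB.InQStopper P Q f g (Sum.inl (g q)) := SB.inQ_step hs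
    have : Nonempty β := ⟨q⟩
    have hex : ∃ a ∈ Q, g a = g q := ⟨q, hq, rfl⟩
    rw [SB.h, dif_pos hs']
    exact hgi (Function.invFunOn_mem hex) hq (Function.invFunOn_eq hex)
  have h2 : ∀ p, ¬ SB.InQStopper P Q f g (Sum.inl p) → SB.h P Q f g p = f p := by
    intro p hp
    rw [SB.h, dif_neg hp]
  refine ⟨?_, ?_, ?_⟩
  · intro p hp
    by_cases hs : SB.InQStopper P Q f g (Sum.inl p)
    · obtain ⟨q, hq, rfl, hi⟩ := hA p hs
      rwa [h1 q hq hi]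
    · rw [h2 p hs]
      exact hfm hp
  · intro p hp p' hp' he
    by_cases hs : SB.InQStopper P Q f g (Sum.inl p) <;>
      by_cases hs' : SB.InQStopper P Q f g (Sum.inl p')
    · obtain ⟨q, hq, rfl, hi⟩ := hA p hs
      obtain ⟨q', hq', rfl, hi'⟩ := hA p' hs'
      rw [h1 q hq hi, h1 q' hq' hi'] at he
      rw [he]
    · obtain ⟨q, hq, rfl, hi⟩ := hA p hs
      rw [h1 q hq hi, h2 p' hs'] at he
      exact absurd (hC p' hp' (he ▸ hi)) hs'
    · obtain ⟨q, hq, rfl, hi⟩ := hA p' hs'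
      rw [h1 q hq hi, h2 p hs] at he
      exact absurd (hC p hp (he.symm ▸ hi)) hs
    · rw [h2 p hs, h2 p' hs'] at he
      exact hfi hp hp' he
  · intro q hq
    by_cases hs : SB.InQStopper P Q f g (Sum.inr q)
    · exact ⟨g q, hgm hq, h1 q hq hs⟩
    · have hf : q ∈ f '' P := by
        by_contra hn
        exact hs ⟨q, hq, hn, Relation.ReflTransGen.refl⟩
      obtain ⟨p, hp, rfl⟩ := hf
      exact ⟨p, hp, h2 p fun h => hs (SB.inQ_step h)⟩
end

section
/- Two valid chain elements x and y satisfy (x ⊑ y or y ⊑ x) if and only if there exist natural numbers m and n with step^[m] x = step^[n] y; in particular, two elements share a chain exactly when some common element is reachable from both by finitely many steps. -/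
theorem SB.chainLE_iff {α β : Type*} (f : α → β) (g : β → α) (x y : α ⊕ β) :
    SB.ChainLE f g x y ↔ ∃ n : ℕ, (SB.step f g)^[n] x = y := by
  constructor
  · intro h
    induction h with
    | refl => exact ⟨0, rfl⟩
    | tail _ hbc ih =>
      obtain ⟨n, hn⟩ := ih
      refine ⟨n + 1, ?_⟩
      rw [Function.iterate_succ_apply', hn, hbc]
  · rintro ⟨n, rfl⟩
    induction n with
    | zero => exact Relation.ReflTransGen.refl
    | succ n ih =>
      exact Relation.ReflTransGen.tail ih (Function.iterate_succ_apply' _ _ _)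

theorem SB.valid_mapsTo {α β : Type*} {P : Set α} {Q : Set β} {f : α → β} {g : β → α}
    (hfm : Set.MapsTo f P Q) (hgm : Set.MapsTo g Q P) :
    Set.MapsTo (SB.step f g) {x | SB.Valid P Q x} {x | SB.Valid P Q x} := by
  rintro (p | q) h
  · exact hfm h
  · exact hgm h

theorem SB.step_injOn {α β : Type*} {P : Set α} {Q : Set β} {f : α → β} {g : β → α}
    (hfi : Set.InjOn f P) (hgi : Set.InjOn g Q) :
    Set.InjOn (SB.step f g) {x | SB.Valid P Q x} := by
  rintro (p | q) h (p' | q') h' e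
  · exact congrArg Sum.inl (hfi h h' (Sum.inr.inj e))
  · cases e
  · cases e
  · exact congrArg Sum.inr (hgi h h' (Sum.inl.inj e))

theorem SB.cancel {γ : Type*} {s : γ → γ} {V : Set γ} (hm : Set.MapsTo s V V)
    (hi : Set.InjOn s V) {x y : γ} (hx : x ∈ V) (hy : y ∈ V) (m k : ℕ)
    (h : s^[m] x = s^[m + k] y) : x = s^[k] y := by
  rw [Function.iterate_add_apply] at h
  exact hi.iterate hm m hx (hm.iterate k hy) h

theorem comparable_iff_common_reachable {α β : Type*} (P : Set α) (Q : Set β)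
    (f : α → β) (g : β → α)
    (hfm : Set.MapsTo f P Q) (hfi : Set.InjOn f P)
    (hgm : Set.MapsTo g Q P) (hgi : Set.InjOn g Q)
    (x y : α ⊕ β) (hx : SB.Valid P Q x) (hy : SB.Valid P Q y) :
    (SB.ChainLE f g x y ∨ SB.ChainLE f g y x) ↔
      ∃ m n : ℕ, (SB.step f g)^[m] x = (SB.step f g)^[n] y := by 
  rw [SB.chainLE_iff, SB.chainLE_iff]
  have hm := SB.valid_mapsTo hfm hgm
  have hi := SB.step_injOn hfi hgi
  constructor
  · rintro (⟨n, h⟩ | ⟨n, h⟩)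
    · exact ⟨n, 0, h⟩
    · exact ⟨0, n, h.symm⟩
  · rintro ⟨m, n, h⟩
    rcases le_total m n with hmn | hmn
    · obtain ⟨k, rfl⟩ := Nat.exists_eq_add_of_le hmn
      exact Or.inr ⟨k, (SB.cancel hm hi hx hy m k h).symm⟩
    · obtain ⟨k, rfl⟩ := Nat.exists_eq_add_of_le hmn
      exact Or.inl ⟨k, (SB.cancel hm hi hy hx n k h.symm).symm⟩
end
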